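/- Let A be an n-multilinear local differential operator viewed as a map Loc(E)^{⊗n} → Ω^{N,0} (via Loc(E) ≅ Ω^{N,0}, f ↔ f dx^1∧⋯∧dx^N). Then A(f_1,…,f_n) lies in d_H(Ω^{N−1,0}) for every n-tuple (f_1,…,f_n) of local functions if and only if χ(A) = 0. -/

import Mathlib

/-!
The statement rests on two facts about a polarized operator `A` with characteristic `χ(A)`.

* Integration by parts: `a · D^I b` and `(-1)^{|I|} D^I a · b` differ by a total divergence
  (`isDiv_DPow`). Summing over the coefficients, of which only finitely many act nontrivially on a
  given tuple of local functions, `A(f)` and `χ(A)(f)` agree modulo total divergences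
  (`isDiv_realizeP_sub`). So if `χ(A) = 0`, every `A(f)` is a divergence; conversely it suffices
  to show that `χ(A)` vanishes if all its values are divergences.

* Detection by integrals: if the sections underlying `σ` and `τ` differ by a compactly supported
  variation, the difference of the pullbacks of a total divergence along their jets integrates to
  zero (`integral_Dtot_sub`). Suppose `χ(A)(f) ≠ 0` at some point. Realize enough
  of the jet there by a section `σ` (`exists_holonomic`) and put `b(x) = χ(A)(f)(jet σ x)`. Since
  `χ(A)` does not differentiate `f_1` horizontally, it is linear over functions of `x` in `f_1` and
  local in the coordinate `u_0` (`realizeP_chiData_of_eqOn`). Replace `f_1` by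
  `ρ(x) b(x) κ(u_0) f_1`, where `ρ` is a bump function at the base point and `κ` is `1` near the
  values of `σ` there, and let `τ` be `σ` raised out of the support of `κ` above the support of `ρ`.
  Then `χ(A)` of the new tuple is `ρ b²` along `σ` and `0` along `τ`, while `∫ ρ b² > 0`; hence it
  is not a divergence (`realizeP_chiData_eq_zero`).

Total derivatives commute because a local function is determined by its pullbacks along jets of
sections (`IsLocal.eq_of_jet`), where they become partial derivatives on `ℝ^N`.
-/

open scoped BigOperators

namespace JetBundle

/-- Multi-indices `J = (j_1,…,j_N)`. -/
abbrev MI (N : ℕ) := Fin N → ℕ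

/-- A point of the infinite jet bundle `J^∞E`, with coordinates `(x^i, u_J)`. -/
abbrev JetPt (N : ℕ) := (Fin N → ℝ) × (MI N → ℝ)

/-- Real-valued functions on the infinite jet bundle. -/
abbrev Fn (N : ℕ) := JetPt N → ℝ

/-- Partial derivative with respect to the base coordinate `x^i`. -/
noncomputable def pderivX {N : ℕ} (i : Fin N) (f : Fn N) : Fn N :=
  fun p => deriv (fun t => f (Function.update p.1 i t, p.2)) (p.1 i)

/-- Partial derivative with respect to the jet coordinate `u_J`. -/
noncomputable def pderivU {N : ℕ} (J : MI N) (f : Fn N) : Fn N :=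
  fun p => deriv (fun t => f (p.1, Function.update p.2 J t)) (p.2 J)

/-- `iJ` : the multi-index `J` with its `i`-th entry increased by `1`. -/
def inc {N : ℕ} (i : Fin N) (J : MI N) : MI N := Function.update J i (J i + 1)

/-- The total derivative `d/dx^i = ∂/∂x^i + Σ_J u_{iJ} ∂/∂u_J`. -/
noncomputable def Dtot {N : ℕ} (i : Fin N) (f : Fn N) : Fn N :=
  fun p => pderivX i f p + ∑' J : MI N, p.2 (inc i J) * pderivU J f p

/-- Iterated total derivative `(d/dx)^I`. -/
noncomputable def DPow {N : ℕ} (I : MI N) : Fn N → Fn N :=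
  (List.finRange N).foldr (fun i g => (Dtot i)^[I i] ∘ g) id

/-- Iterated vertical derivative `(∂/∂u)^α` for a finitely supported exponent `α`. -/
noncomputable def UPow {N : ℕ} (α : MI N →₀ ℕ) : Fn N → Fn N :=
  α.support.toList.foldr (fun J g => (pderivU J)^[α J] ∘ g) id

/-- A local function: a smooth function of the base coordinates and
finitely many jet coordinates `u_J`. -/
def IsLocal {N : ℕ} (f : Fn N) : Prop :=
  ∃ (S : Finset (MI N)) (g : ((Fin N → ℝ) × (↥S → ℝ)) → ℝ),
    ContDiff ℝ (⊤ : ℕ∞) g ∧ ∀ p : JetPt N, f p = g (p.1, fun J => p.2 J.1)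

/-- The formal differential degree of an exponent `α`: the maximal `|J|` with `α J ≠ 0`. -/
def degf {N : ℕ} (α : MI N →₀ ℕ) : ℕ := α.support.sup fun J => ∑ i, J i

/-- Index type for the coefficients of an `n`-multilinear local differential operator:
a tuple of multi-indices `(I_1,…,I_n)` and vertical exponents `(α_1,…,α_n)`. -/
abbrev Idx (N n : ℕ) := (Fin n → MI N) × (Fin n → (MI N →₀ ℕ))

/-- Coefficient data of an `n`-multilinear local differential operator. -/
abbrev OpData (N n : ℕ) := Idx N n → Fn N

/-- `n`-multilinear operators on functions on the jet bundle. -/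
abbrev Op (N n : ℕ) := (Fin n → Fn N) → Fn N

/-- An `n`-tuple of local functions. -/
def LocalTuple {N n : ℕ} (f : Fin n → Fn N) : Prop := ∀ j, IsLocal (f j)

/-- Coefficient data is admissible if all coefficients are local functions and, for each `m`,
only finitely many coefficients with `Σ_j deg_f(α_j) ≤ m` are nonzero. -/
def Good {N n : ℕ} (q : OpData N n) : Prop :=
  (∀ Iα, IsLocal (q Iα)) ∧
    ∀ m : ℕ, {Iα : Idx N n | q Iα ≠ 0 ∧ ∑ j, degf (Iα.2 j) ≤ m}.Finite

/-- The (unpolarized) realization of coefficient data: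
`A(f_1,…,f_n) = Σ p_{I,α} Π_j (d/dx)^{I_j} (∂/∂u)^{α_j} f_j`. -/
noncomputable def realizeU {N n : ℕ} (q : OpData N n) (f : Fin n → Fn N) : Fn N :=
  fun pt => ∑' Iα : Idx N n, q Iα pt * ∏ j, DPow (Iα.1 j) (UPow (Iα.2 j) (f j)) pt

/-- The polarized realization of coefficient data: the slot `I_1` records powers of
`d/dy_1 = Σ_j d/dx_j`, i.e. total derivatives applied to the whole product, while for `j ≥ 2`
the slot `I_j` records powers of `d/dy_j = d/dx_j` acting on the `j`-th argument:
`A(f_1,…,f_n) = Σ q_{I;α} (d/dx)^{I_1} [ (∂/∂u)^{α_1}f_1 · Π_{j≥2} (d/dx)^{I_j}(∂/∂u)^{α_j} f_j ]`. -/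
noncomputable def realizeP {N n : ℕ} [NeZero n] (q : OpData N n) (f : Fin n → Fn N) : Fn N :=
  fun pt => ∑' Iα : Idx N n, q Iα pt *
    DPow (Iα.1 0) (fun p => ∏ j,
      if j = (0 : Fin n) then UPow (Iα.2 j) (f j) p
      else DPow (Iα.1 j) (UPow (Iα.2 j) (f j)) p) pt

/-- The characteristic, on polarized coefficient data:
`χ(q)_{(0,I_2,…,I_n);α} := Σ_{I_1} (−1)^{|I_1|} (d/dx)^{I_1} q_{I_1,I_2,…,I_n;α}`. -/
noncomputable def chiData {N n : ℕ} [NeZero n] (q : OpData N n) : OpData N n :=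
  fun Iα =>
    if Iα.1 0 = 0 then
      fun pt => ∑' K : MI N,
        (-1 : ℝ) ^ (∑ i, K i) * DPow K (q (Function.update Iα.1 0 K, Iα.2)) pt
    else 0

/-- `q` is a polarized presentation of the operator `A` (on local functions). -/
def Presents {N n : ℕ} [NeZero n] (q : OpData N n) (A : Op N n) : Prop :=
  ∀ f, LocalTuple f → ∀ pt, A f pt = realizeP q f pt

/-- `A` is an `n`-multilinear local differential operator (unpolarized form). -/
def IsLDO {N n : ℕ} (A : Op N n) : Prop :=
  ∃ q : OpData N n, Good q ∧ ∀ f, LocalTuple f → ∀ pt, A f pt = realizeU q f pt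

/-- `A` is an `n`-multilinear local differential operator, given by a polarized presentation. -/
def IsPLDO {N n : ℕ} [NeZero n] (A : Op N n) : Prop :=
  ∃ q : OpData N n, Good q ∧ Presents q A

/-- `A` is an `n`-multilinear local differential operator with vanishing characteristic. -/
def ChiZero {N n : ℕ} [NeZero n] (A : Op N n) : Prop :=
  ∃ q : OpData N n, Good q ∧ Presents q A ∧
    ∀ f, LocalTuple f → ∀ pt, realizeP (chiData q) f pt = 0

/-- Precomposition `A ∘ d/dx^i_j` with the total derivative acting on the `j`-th argument. -/
noncomputable def precompD {N n : ℕ} (A : Op N n) (i : Fin N) (j : Fin n) : Op N n :=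
  fun f => A (Function.update f j (Dtot i (f j)))

/-- A horizontal form, recorded by its coefficients on the basis
`(dx)^ε = (dx^1)^{ε^1} ∧ ⋯ ∧ (dx^N)^{ε^N}`, `ε : Fin N → Bool`. -/
abbrev Form (N : ℕ) := (Fin N → Bool) → Fn N

/-- The form-degree `|ε|`. -/
def wt {N : ℕ} (ε : Fin N → Bool) : ℕ := ∑ i, if ε i then 1 else 0

/-- The sign exponent: the number of entries of `ε` below `i` which are set. -/
def pos {N : ℕ} (i : Fin N) (ε : Fin N → Bool) : ℕ := ∑ l, if l < i ∧ ε l then 1 else 0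

/-- The horizontal differential `d_H ω = Σ_i dx^i ∧ (d/dx^i) ω`. -/
noncomputable def dH {N : ℕ} (ω : Form N) : Form N :=
  fun δ pt => ∑ i : Fin N,
    if δ i then (-1 : ℝ) ^ pos i δ * Dtot i (ω (Function.update δ i false)) pt else 0

/-- A matrix of operators acting on horizontal forms (linear case). -/
abbrev FormOp (N : ℕ) := (Fin N → Bool) → (Fin N → Bool) → (Fn N → Fn N)

/-- Application of a matrix of operators to a form. -/
noncomputable def applyFO {N : ℕ} (M : FormOp N) (ω : Form N) : Form N :=
  fun δ pt => ∑ ε : Fin N → Bool, M ε δ (ω ε) pt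

/-- A degree element of `DEnd(n)`: a matrix indexed by basis multidegrees of the inputs
`(ε_1,…,ε_n)` and of the output `δ`, with `n`-multilinear operator entries. -/
abbrev DMat (N n : ℕ) := (Fin n → (Fin N → Bool)) → (Fin N → Bool) → Op N n

/-- All matrix entries are local differential operators. -/
def LDOMat {N n : ℕ} [NeZero n] (F : DMat N n) : Prop := ∀ εs δ, IsPLDO (F εs δ)

/-- `F` represents a degree-`k` map of the regraded horizontal complexes
(`Ω_i := Ω^{N−i,0}`): the entry at `(ε⃗, δ)` vanishes unless
`N − wt δ = k + Σ_j (N − wt ε_j)`. -/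
def GradedMat {N n : ℕ} (k : ℤ) (F : DMat N n) : Prop :=
  ∀ εs δ, F εs δ ≠ 0 → (wt δ : ℤ) = (N : ℤ) - k - ∑ j, ((N : ℤ) - (wt (εs j) : ℤ))

/-- The differential `(δf)_s = d_H f_s − (−1)^k f_{s−1} d_H^{⊗n}` of the complex `DEnd_*(n)`,
written out on matrix entries. -/
noncomputable def deltaMat {N n : ℕ} (k : ℤ) (F : DMat N n) : DMat N n :=
  fun εs δ g =>
    (fun pt => ∑ i : Fin N,
      if δ i then (-1 : ℝ) ^ pos i δ * Dtot i (F εs (Function.update δ i false) g) pt else 0)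
    -
    ((-1 : ℝ) ^ k) • (fun pt => ∑ j : Fin n, ∑ i : Fin N,
      if εs j i = false then
        (-1 : ℝ) ^ ((∑ l ∈ Finset.univ.filter fun l => l < j, wt (εs l)) + pos i (εs j)) *
          F (Function.update εs j (Function.update (εs j) i true)) δ
            (Function.update g j (Dtot i (g j))) pt
      else 0)

/-- A matrix of operators vanishes (on local arguments). -/
def MatZeroLoc {N n : ℕ} (F : DMat N n) : Prop :=
  ∀ εs δ g, LocalTuple g → ∀ pt, F εs δ g pt = 0

/-- Two matrices of operators agree (on local arguments). -/
def MatEqLoc {N n : ℕ} (F G : DMat N n) : Prop :=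
  ∀ εs δ g, LocalTuple g → ∀ pt, F εs δ g pt = G εs δ g pt

/-- The projection `B_0 : DEnd_0(n) → LDO(n)`, i.e. the component `f_0` on the identifications
`[(Ω_*)^{⊗n}]_0 ≅ Loc(E)^{⊗n}`, `Ω_0 ≅ Loc(E)`. -/
def B0 {N n : ℕ} (F : DMat N n) : Op N n := F (fun _ _ => true) fun _ => true

/-- A form with coefficients in `LDO(n)`: an element of the operator complex `O^*(n)`. -/
abbrev OForm (N n : ℕ) := (Fin N → Bool) → Op N n

/-- The differential of the operator complex: `d(A (dx)^ε) = Σ_i (d/dx^i ∘ A) dx^i ∧ (dx)^ε`. -/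
noncomputable def dO {N n : ℕ} (ω : OForm N n) : OForm N n :=
  fun δ g pt => ∑ i : Fin N,
    if δ i then (-1 : ℝ) ^ pos i δ * Dtot i (ω (Function.update δ i false) g) pt else 0

/-- An element of `O^*(n)` concentrated in degree `k`. -/
def OGraded {N n : ℕ} (k : ℕ) (ω : OForm N n) : Prop := ∀ δ, ω δ ≠ 0 → wt δ = k

/-- All coefficients are local differential operators. -/
def OLDO {N n : ℕ} [NeZero n] (ω : OForm N n) : Prop := ∀ δ, IsPLDO (ω δ)

/-- An element of `O^*(n)` vanishes on local arguments. -/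
def OZeroLoc {N n : ℕ} (ω : OForm N n) : Prop :=
  ∀ δ g, LocalTuple g → ∀ pt, ω δ g pt = 0

/-- Two elements of `O^*(n)` agree on local arguments. -/
def OEqLoc {N n : ℕ} (ω η : OForm N n) : Prop :=
  ∀ δ g, LocalTuple g → ∀ pt, ω δ g pt = η δ g pt

/-- The Euler operator `E(L dx^1∧⋯∧dx^N) = Σ_I (−1)^{|I|} (d/dx)^I (∂L/∂u_I)`. -/
noncomputable def Euler {N : ℕ} (L : Fn N) : Fn N :=
  fun pt => ∑' I : MI N, (-1 : ℝ) ^ (∑ i, I i) * DPow I (pderivU I L) pt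

end JetBundle

namespace JetBundle

section

open Function

variable {N n : ℕ}

/-! ### Local functions and derivatives -/

theorem hasDerivAt_comp_rep {S : Finset (MI N)} {g : ((Fin N → ℝ) × (↥S → ℝ)) → ℝ}
    (hg : ContDiff ℝ (⊤ : ℕ∞) g) {f : Fn N} (hf : ∀ p : JetPt N, f p = g (p.1, fun J => p.2 J.1))
    (γ : ℝ → JetPt N) (t₀ : ℝ) (v : Fin N → ℝ) (w : MI N → ℝ)
    (h1 : ∀ k, HasDerivAt (fun t => (γ t).1 k) (v k) t₀)
    (h2 : ∀ J, HasDerivAt (fun t => (γ t).2 J) (w J) t₀) :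
    HasDerivAt (fun t => f (γ t))
      (fderiv ℝ g ((γ t₀).1, fun J => (γ t₀).2 J.1) (v, fun J => w J.1)) t₀ := by
  have hd : HasFDerivAt g (fderiv ℝ g ((γ t₀).1, fun J => (γ t₀).2 J.1))
      ((γ t₀).1, fun J => (γ t₀).2 J.1) :=
    (hg.differentiable (by simp) _).hasFDerivAt
  have hc : HasDerivAt (fun t => ((γ t).1, fun J : S => (γ t).2 J.1))
      (v, fun J : S => w J.1) t₀ :=
    (hasDerivAt_pi.2 h1).prodMk (hasDerivAt_pi.2 fun J : S => h2 J.1)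
  have := hd.comp_hasDerivAt t₀ hc
  simpa [hf, Function.comp_def] using this

theorem pderivX_rep {S : Finset (MI N)} {g : ((Fin N → ℝ) × (↥S → ℝ)) → ℝ}
    (hg : ContDiff ℝ (⊤ : ℕ∞) g) {f : Fn N} (hf : ∀ p : JetPt N, f p = g (p.1, fun J => p.2 J.1))
    (i : Fin N) (p : JetPt N) :
    pderivX i f p = fderiv ℝ g (p.1, fun J => p.2 J.1) (Pi.single i 1, 0) := by
  have h := hasDerivAt_comp_rep hg hf (fun t => (update p.1 i t, p.2)) (p.1 i) (Pi.single i 1) 0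
    (fun k => hasDerivAt_pi.1 (hasDerivAt_update p.1 i (p.1 i)) k)
    (fun J => hasDerivAt_const _ _)
  simp only [update_eq_self] at h
  exact h.deriv

theorem pderivU_rep {S : Finset (MI N)} {g : ((Fin N → ℝ) × (↥S → ℝ)) → ℝ}
    (hg : ContDiff ℝ (⊤ : ℕ∞) g) {f : Fn N} (hf : ∀ p : JetPt N, f p = g (p.1, fun J => p.2 J.1))
    (J : MI N) (p : JetPt N) :
    pderivU J f p = fderiv ℝ g (p.1, fun K => p.2 K.1) (0, fun K => if K.1 = J then 1 else 0) := by
  have h := hasDerivAt_comp_rep hg hf (fun t => (p.1, update p.2 J t)) (p.2 J) 0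
    (fun K => if K = J then 1 else 0)
    (fun k => hasDerivAt_const _ _)
    (fun K => by
      by_cases hK : K = J
      · subst hK; simpa using hasDerivAt_id' _
      · simpa [update_of_ne hK, hK] using hasDerivAt_const _ _)
  simp only [update_eq_self] at h
  exact h.deriv

/-- The total derivative of a local function is the derivative of its finite-dimensional
representative along the (truncated) Cartan direction. -/
theorem Dtot_rep {S : Finset (MI N)} {g : ((Fin N → ℝ) × (↥S → ℝ)) → ℝ}
    (hg : ContDiff ℝ (⊤ : ℕ∞) g) {f : Fn N} (hf : ∀ p : JetPt N, f p = g (p.1, fun J => p.2 J.1))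
    (i : Fin N) (p : JetPt N) :
    Dtot i f p = fderiv ℝ g (p.1, fun J => p.2 J.1)
      (Pi.single i 1, fun J => p.2 (inc i J.1)) := by
  unfold Dtot
  rw [pderivX_rep hg hf, tsum_eq_sum (s := S)]
  · have : ((Pi.single i 1, fun J : S => p.2 (inc i J.1)) : (Fin N → ℝ) × (S → ℝ))
        = (Pi.single i 1, 0) + ∑ J : S, p.2 (inc i J.1) •
          (((0 : Fin N → ℝ), fun K : S => if K.1 = J.1 then (1 : ℝ) else 0)) := by
      ext k
      · simp [Prod.fst_sum]
      · simp only [Prod.snd_add, Prod.snd_sum, Pi.add_apply, Finset.sum_apply, Prod.smul_snd,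
          Pi.smul_apply, smul_eq_mul, Pi.zero_apply, zero_add, mul_ite, mul_one, mul_zero]
        simp only [Subtype.coe_inj]
        simp
    rw [this, map_add, map_sum]
    congr 1
    rw [← Finset.sum_coe_sort]
    refine Finset.sum_congr rfl fun J _ => ?_
    rw [map_smul, pderivU_rep hg hf, smul_eq_mul]
  · intro J hJ
    rw [pderivU_rep hg hf]
    have : ((0, fun K => if K.1 = J then 1 else 0) : (Fin N → ℝ) × (S → ℝ)) = 0 := by
      ext k
      · rfl
      · have : k.1 ≠ J := fun h => hJ (h ▸ k.2)
        simp [this]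
    rw [this, map_zero, mul_zero]

/-- Chain rule: along a curve in the jet space tangent at `t₀` to the `i`-th Cartan direction,
a local function has derivative its `i`-th total derivative. -/
theorem IsLocal.hasDerivAt {f : Fn N} (hf : IsLocal f) (i : Fin N)
    (γ : ℝ → JetPt N) (t₀ : ℝ)
    (h1 : ∀ k, HasDerivAt (fun t => (γ t).1 k) ((Pi.single i 1 : Fin N → ℝ) k) t₀)
    (h2 : ∀ J, HasDerivAt (fun t => (γ t).2 J) ((γ t₀).2 (inc i J)) t₀) :
    HasDerivAt (fun t => f (γ t)) (Dtot i f (γ t₀)) t₀ := by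
  obtain ⟨S, g, hg, hfg⟩ := hf
  rw [Dtot_rep hg hfg]
  exact hasDerivAt_comp_rep hg hfg γ t₀ _ (fun J => (γ t₀).2 (inc i J)) h1 h2

theorem IsLocal.exists_rep {f : Fn N} (hf : IsLocal f) :
    ∃ S : Finset (MI N), ∀ T, S ⊆ T → ∃ g : ((Fin N → ℝ) × (↥T → ℝ)) → ℝ,
      ContDiff ℝ (⊤ : ℕ∞) g ∧ ∀ p : JetPt N, f p = g (p.1, fun J => p.2 J.1) := by
  obtain ⟨S, g, hg, hfg⟩ := hf
  refine ⟨S, fun T hT => ⟨fun q => g (q.1, fun J => q.2 ⟨J.1, hT J.2⟩), ?_, fun p => hfg p⟩⟩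
  fun_prop

theorem IsLocal.const (c : ℝ) : IsLocal (N := N) (fun _ => c) :=
  ⟨∅, fun _ => c, contDiff_const, fun _ => rfl⟩

theorem IsLocal.add {f g : Fn N} (hf : IsLocal f) (hg : IsLocal g) :
    IsLocal (fun p => f p + g p) := by
  obtain ⟨S, hS⟩ := hf.exists_rep
  obtain ⟨T, hT⟩ := hg.exists_rep
  obtain ⟨a, ha, hfa⟩ := hS (S ∪ T) Finset.subset_union_left
  obtain ⟨b, hb, hgb⟩ := hT (S ∪ T) Finset.subset_union_right
  exact ⟨_, _, ha.add hb, fun p => by simp only [hfa, hgb]⟩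

theorem IsLocal.mul {f g : Fn N} (hf : IsLocal f) (hg : IsLocal g) :
    IsLocal (fun p => f p * g p) := by
  obtain ⟨S, hS⟩ := hf.exists_rep
  obtain ⟨T, hT⟩ := hg.exists_rep
  obtain ⟨a, ha, hfa⟩ := hS (S ∪ T) Finset.subset_union_left
  obtain ⟨b, hb, hgb⟩ := hT (S ∪ T) Finset.subset_union_right
  exact ⟨_, _, ha.mul hb, fun p => by simp only [hfa, hgb]⟩

theorem IsLocal.sum {ι : Type*} (s : Finset ι) {f : ι → Fn N} (hf : ∀ k ∈ s, IsLocal (f k)) :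
    IsLocal (fun p => ∑ k ∈ s, f k p) := by
  classical
  induction s using Finset.induction_on with
  | empty => simpa using IsLocal.const 0
  | insert a s ha ih =>
    simp only [Finset.sum_insert ha]
    exact (hf a (by simp)).add (ih fun k hk => hf k (by simp [hk]))

theorem IsLocal.prod {ι : Type*} (s : Finset ι) {f : ι → Fn N} (hf : ∀ k ∈ s, IsLocal (f k)) :
    IsLocal (fun p => ∏ k ∈ s, f k p) := by
  classical
  induction s using Finset.induction_on with
  | empty => simpa using IsLocal.const 1
  | insert a s ha ih =>
    simp only [Finset.prod_insert ha]
    exact (hf a (by simp)).mul (ih fun k hk => hf k (by simp [hk]))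

theorem IsLocal.pderivU {f : Fn N} (hf : IsLocal f) (J : MI N) : IsLocal (pderivU J f) := by
  obtain ⟨S, g, hg, hfg⟩ := hf
  refine ⟨S, fun q => fderiv ℝ g q (0, fun K => if K.1 = J then 1 else 0), ?_,
    pderivU_rep hg hfg J⟩
  exact (hg.fderiv_right (m := (⊤ : ℕ∞)) (by simp)).clm_apply contDiff_const

theorem IsLocal.Dtot {f : Fn N} (hf : IsLocal f) (i : Fin N) : IsLocal (Dtot i f) := by
  classical
  obtain ⟨S, g, hg, hfg⟩ := hf
  let T := S ∪ S.image (inc i)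
  have hT1 : ∀ J : S, J.1 ∈ T := fun J => Finset.mem_union_left _ J.2
  have hT2 : ∀ J : S, inc i J.1 ∈ T := fun J =>
    Finset.mem_union_right _ (Finset.mem_image_of_mem _ J.2)
  refine ⟨T, fun q => fderiv ℝ g (q.1, fun J => q.2 ⟨J.1, hT1 J⟩)
    (Pi.single i 1, fun J => q.2 ⟨inc i J.1, hT2 J⟩), ?_, fun p => Dtot_rep hg hfg i p⟩
  have h := hg.fderiv_right (m := (⊤ : ℕ∞)) (by simp)
  refine (h.comp (f := fun q : (Fin N → ℝ) × (T → ℝ) => (q.1, fun J : S => q.2 ⟨J.1, hT1 J⟩))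
    (by fun_prop)).clm_apply (by fun_prop)

theorem IsLocal.iterate_Dtot {f : Fn N} (hf : IsLocal f) (i : Fin N) (k : ℕ) :
    IsLocal ((JetBundle.Dtot i)^[k] f) := by
  induction k with
  | zero => exact hf
  | succ k ih => rw [iterate_succ_apply']; exact ih.Dtot i

theorem IsLocal.iterate_pderivU {f : Fn N} (hf : IsLocal f) (J : MI N) (k : ℕ) :
    IsLocal ((JetBundle.pderivU J)^[k] f) := by
  induction k with
  | zero => exact hf
  | succ k ih => rw [iterate_succ_apply']; exact ih.pderivU J

/-- The composite `D_{i₁}^{I i₁} ∘ D_{i₂}^{I i₂} ∘ ⋯` over a list of directions; `DPow` is the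
case of the list of all directions. -/
noncomputable def DList (I : MI N) (l : List (Fin N)) : Fn N → Fn N :=
  l.foldr (fun i g => (Dtot i)^[I i] ∘ g) id

theorem DList_cons (I : MI N) (i : Fin N) (l : List (Fin N)) (f : Fn N) :
    DList I (i :: l) f = (Dtot i)^[I i] (DList I l f) := rfl

theorem IsLocal.DList {f : Fn N} (hf : IsLocal f) (I : MI N) (l : List (Fin N)) :
    IsLocal (DList I l f) := by
  induction l with
  | nil => exact hf
  | cons i l ih => exact ih.iterate_Dtot i _

theorem IsLocal.DPow {f : Fn N} (hf : IsLocal f) (I : MI N) : IsLocal (DPow I f) :=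
  hf.DList I _

/-- The composite of the vertical derivatives `(∂/∂u_J)^{α J}` over a list of multi-indices;
`UPow` is the case of a list enumerating the support of `α`. -/
noncomputable def UList (α : MI N →₀ ℕ) (l : List (MI N)) : Fn N → Fn N :=
  l.foldr (fun J g => (pderivU J)^[α J] ∘ g) id

theorem UList_cons (α : MI N →₀ ℕ) (J : MI N) (l : List (MI N)) (f : Fn N) :
    UList α (J :: l) f = (pderivU J)^[α J] (UList α l f) := rfl

theorem IsLocal.UPow {f : Fn N} (hf : IsLocal f) (α : MI N →₀ ℕ) : IsLocal (UPow α f) := by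
  change IsLocal (UList α _ f)
  induction α.support.toList with
  | nil => exact hf
  | cons i l ih => exact ih.iterate_pderivU i _

/-- The straight line through `p` in the `i`-th Cartan direction. -/
noncomputable def cartanLine (i : Fin N) (p : JetPt N) (t : ℝ) : JetPt N :=
  (fun k => p.1 k + t * (Pi.single i 1 : Fin N → ℝ) k, fun J => p.2 J + t * p.2 (inc i J))

theorem cartanLine_zero (i : Fin N) (p : JetPt N) : cartanLine i p 0 = p := by
  simp [cartanLine]

theorem IsLocal.hasDerivAt_line {f : Fn N} (hf : IsLocal f) (i : Fin N) (p : JetPt N) :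
    HasDerivAt (fun t => f (cartanLine i p t)) (JetBundle.Dtot i f p) 0 := by
  have h := hf.hasDerivAt i (cartanLine i p) 0
    (fun k => by
      simpa [cartanLine] using
        ((hasDerivAt_id' (0 : ℝ)).mul_const ((Pi.single i 1 : Fin N → ℝ) k)).const_add (p.1 k))
    (fun J => by
      rw [cartanLine_zero]
      simpa [cartanLine] using
        ((hasDerivAt_id' (0 : ℝ)).mul_const (p.2 (inc i J))).const_add (p.2 J))
  rwa [cartanLine_zero] at h

theorem Dtot_add {f g : Fn N} (hf : IsLocal f) (hg : IsLocal g) (i : Fin N) (p : JetPt N) :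
    Dtot i (fun p => f p + g p) p = Dtot i f p + Dtot i g p :=
  ((hf.add hg).hasDerivAt_line i p).unique
    ((hf.hasDerivAt_line i p).add (hg.hasDerivAt_line i p))

theorem Dtot_mul {f g : Fn N} (hf : IsLocal f) (hg : IsLocal g) (i : Fin N) (p : JetPt N) :
    Dtot i (fun p => f p * g p) p = Dtot i f p * g p + f p * Dtot i g p := by
  have h := ((hf.mul hg).hasDerivAt_line i p).unique
    ((hf.hasDerivAt_line i p).mul (hg.hasDerivAt_line i p))
  simpa [cartanLine_zero] using h

theorem Dtot_const (c : ℝ) (i : Fin N) : Dtot i (fun _ => c) = (fun _ => 0 : Fn N) := by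
  ext p
  simp [Dtot, pderivX, pderivU]

theorem DPow_zero_fn (I : MI N) : DPow I (fun _ => 0 : Fn N) = fun _ => 0 := by
  change DList I _ _ = _
  induction List.finRange N with
  | nil => rfl
  | cons i l ih => rw [DList_cons, ih, iterate_fixed (Dtot_const 0 i)]

theorem DPow_zero_idx (f : Fn N) : DPow 0 f = f := by
  change DList 0 _ _ = _
  induction List.finRange N with
  | nil => rfl
  | cons i l ih => rw [DList_cons, ih]; rfl

/-! ### Jets of sections -/

/-- A holonomic family: `σ J` plays the role of `∂^J φ` for a smooth section `φ = σ 0`, which is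
encoded by the relation `∂_i σ_J = σ_{iJ}`. -/
structure Holonomic (σ : MI N → (Fin N → ℝ) → ℝ) : Prop where
  smooth : ∀ J, ContDiff ℝ (⊤ : ℕ∞) (σ J)
  step : ∀ i J x, HasDerivAt (fun t => σ J (update x i t)) (σ (inc i J) x) (x i)

/-- The infinite jet at `x` of the section underlying `σ`. -/
def jet (σ : MI N → (Fin N → ℝ) → ℝ) (x : Fin N → ℝ) : JetPt N := (x, fun J => σ J x)

theorem Holonomic.contDiff_comp {σ : MI N → (Fin N → ℝ) → ℝ} (hσ : Holonomic σ) {f : Fn N}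
    (hf : IsLocal f) : ContDiff ℝ (⊤ : ℕ∞) (fun x => f (jet σ x)) := by
  obtain ⟨S, g, hg, hfg⟩ := hf
  simp only [hfg, jet]
  exact hg.comp (contDiff_id.prodMk (contDiff_pi.2 fun J => hσ.smooth J.1))

theorem Holonomic.fderiv_comp {σ : MI N → (Fin N → ℝ) → ℝ} (hσ : Holonomic σ) {f : Fn N}
    (hf : IsLocal f) (i : Fin N) (x : Fin N → ℝ) :
    fderiv ℝ (fun x => f (jet σ x)) x (Pi.single i 1) = Dtot i f (jet σ x) := by
  have h1 := hf.hasDerivAt i (fun t => jet σ (update x i t)) (x i)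
    (fun k => hasDerivAt_pi.1 (hasDerivAt_update x i (x i)) k)
    (fun J => by simpa [jet] using hσ.step i J x)
  rw [update_eq_self] at h1
  have h2 : HasFDerivAt (fun x => f (jet σ x)) (fderiv ℝ (fun x => f (jet σ x)) x)
      (update x i (x i)) := by
    rw [update_eq_self]
    exact ((hσ.contDiff_comp hf).differentiable (by simp) x).hasFDerivAt
  exact (h2.comp_hasDerivAt (x i) (hasDerivAt_update x i (x i))).unique h1

theorem Holonomic.add {σ τ : MI N → (Fin N → ℝ) → ℝ} (hσ : Holonomic σ) (hτ : Holonomic τ) :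
    Holonomic (fun J x => σ J x + τ J x) :=
  ⟨fun J => (hσ.smooth J).add (hτ.smooth J), fun i J x => (hσ.step i J x).add (hτ.step i J x)⟩

theorem Holonomic.const_mul {σ : MI N → (Fin N → ℝ) → ℝ} (hσ : Holonomic σ) (c : ℝ) :
    Holonomic (fun J x => c * σ J x) :=
  ⟨fun J => contDiff_const.mul (hσ.smooth J), fun i J x => (hσ.step i J x).const_mul c⟩

theorem Holonomic.zero : Holonomic (N := N) (fun _ _ => 0) :=
  ⟨fun _ => contDiff_const, fun _ _ _ => hasDerivAt_const _ _⟩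

theorem Holonomic.sum {ι : Type*} (s : Finset ι) {σ : ι → MI N → (Fin N → ℝ) → ℝ}
    (hσ : ∀ k, Holonomic (σ k)) : Holonomic (fun J x => ∑ k ∈ s, σ k J x) := by
  classical
  induction s using Finset.induction_on with
  | empty => simpa using Holonomic.zero
  | insert a s ha ih => simp only [Finset.sum_insert ha]; exact (hσ a).add ih

/-- The jet of a product `x ↦ ∏ b_i(x_i)` of functions of one variable. -/
noncomputable def prodSec (b : Fin N → ℝ → ℝ) (J : MI N) (x : Fin N → ℝ) : ℝ :=
  ∏ i, iteratedDeriv (J i) (b i) (x i)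

theorem holonomic_prodSec {b : Fin N → ℝ → ℝ} (hb : ∀ i, ContDiff ℝ (⊤ : ℕ∞) (b i)) :
    Holonomic (prodSec b) := by
  have hs : ∀ i k, ContDiff ℝ (⊤ : ℕ∞) (iteratedDeriv k (b i)) := fun i k => by
    rw [iteratedDeriv_eq_iterate]
    exact ContDiff.iterate_deriv k (hb i)
  refine ⟨fun J => ?_, fun i J x => ?_⟩
  · unfold prodSec
    exact contDiff_prod fun i _ => (hs i _).comp (contDiff_apply ℝ ℝ i)
  · have hd : HasDerivAt (fun t => iteratedDeriv (J i) (b i) t)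
        (iteratedDeriv (J i + 1) (b i) (x i)) (x i) := by
      rw [iteratedDeriv_succ]
      exact ((hs i (J i)).differentiable (by simp) _).hasDerivAt
    have h1 : ∀ t, prodSec b J (update x i t) = iteratedDeriv (J i) (b i) t *
        ∏ k ∈ Finset.univ.erase i, iteratedDeriv (J k) (b k) (x k) := fun t => by
      unfold prodSec
      rw [← Finset.mul_prod_erase _ _ (Finset.mem_univ i), update_self]
      congr 1
      refine Finset.prod_congr rfl fun k hk => ?_
      rw [update_of_ne (Finset.ne_of_mem_erase hk)]
    have h2 : prodSec b (inc i J) x = iteratedDeriv (J i + 1) (b i) (x i) *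
        ∏ k ∈ Finset.univ.erase i, iteratedDeriv (J k) (b k) (x k) := by
      unfold prodSec inc
      rw [← Finset.mul_prod_erase _ _ (Finset.mem_univ i), update_self]
      congr 1
      refine Finset.prod_congr rfl fun k hk => ?_
      rw [update_of_ne (Finset.ne_of_mem_erase hk)]
    simp only [h1, h2]
    exact hd.mul_const _

/-- Every finite part of a jet is realized by a section, namely a Taylor polynomial. -/
theorem exists_holonomic (p : JetPt N) (S : Finset (MI N)) :
    ∃ σ, Holonomic σ ∧ ∀ J ∈ S, σ J p.1 = p.2 J := by
  classical
  have hmon : ∀ (a : ℝ) (m k : ℕ),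
      iteratedDeriv k (fun t => (m.factorial : ℝ)⁻¹ * (t - a) ^ m) a = if k = m then 1 else 0 := by
    intro a m k
    rw [iteratedDeriv_const_mul_field]
    have := iteratedDeriv_comp_sub_const k (fun t : ℝ => t ^ m) a
    rw [this]
    simp only [sub_self]
    rw [iteratedDeriv_fun_pow_zero]
    split_ifs
    · exact inv_mul_cancel₀ (by positivity)
    · simp
  let b : MI N → Fin N → ℝ → ℝ :=
    fun J i t => ((J i).factorial : ℝ)⁻¹ * (t - p.1 i) ^ (J i)
  refine ⟨fun K x => ∑ J ∈ S, p.2 J * prodSec (b J) K x,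
    Holonomic.sum S fun J => (holonomic_prodSec fun i => ?_).const_mul _, fun K hK => ?_⟩
  · fun_prop
  · have h : ∀ J, prodSec (b J) K p.1 = if K = J then 1 else 0 := fun J => by
      simp only [prodSec, b, hmon]
      by_cases hKJ : K = J
      · simp [hKJ]
      · obtain ⟨i, hi⟩ := Function.ne_iff.1 hKJ
        rw [if_neg hKJ]
        exact Finset.prod_eq_zero (Finset.mem_univ i) (by simp [hi])
    simp [h, hK]

/-- Local functions are determined by their values on jets of sections. -/
theorem IsLocal.eq_of_jet {f g : Fn N} (hf : IsLocal f) (hg : IsLocal g)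
    (h : ∀ σ x, Holonomic σ → f (jet σ x) = g (jet σ x)) : f = g := by
  ext p
  obtain ⟨S, a, -, hfa⟩ := hf
  obtain ⟨T, b, -, hgb⟩ := hg
  obtain ⟨σ, hσ, hσp⟩ := exists_holonomic p (S ∪ T)
  have := h σ p.1 hσ
  rw [hfa, hgb] at this
  rw [hfa, hgb]
  simp only [jet] at this
  convert! this using 3
  · ext J; exact (hσp J.1 (Finset.mem_union_left _ J.2)).symm
  · ext J; exact (hσp J.1 (Finset.mem_union_right _ J.2)).symm

theorem Dtot_comm {f : Fn N} (hf : IsLocal f) (i j : Fin N) :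
    Dtot i (Dtot j f) = Dtot j (Dtot i f) := by
  refine ((hf.Dtot j).Dtot i).eq_of_jet ((hf.Dtot i).Dtot j) fun σ x hσ => ?_
  have hF := hσ.contDiff_comp hf
  have key : ∀ i j : Fin N, Dtot i (Dtot j f) (jet σ x) =
      fderiv ℝ (fderiv ℝ fun x => f (jet σ x)) x (Pi.single i 1) (Pi.single j 1) := by
    intro i j
    rw [← hσ.fderiv_comp (hf.Dtot j) i x]
    simp only [← hσ.fderiv_comp hf j]
    have hd : DifferentiableAt ℝ (fderiv ℝ fun x => f (jet σ x)) x :=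
      (hF.fderiv_right (m := (⊤ : ℕ∞)) (by simp)).differentiable (by simp) x
    rw [fderiv_clm_apply hd (differentiableAt_const _)]
    simp
  rw [key, key]
  exact (hF.contDiffAt.isSymmSndFDerivAt
    (by rw [minSmoothness_of_isRCLikeNormedField]; norm_cast)).eq _ _

open MeasureTheory in
/-- The integral of a total divergence does not change under compactly supported variations of
the section. -/
theorem integral_Dtot_sub {σ τ : MI N → (Fin N → ℝ) → ℝ} (hσ : Holonomic σ) (hτ : Holonomic τ)
    {K : Set (Fin N → ℝ)} (hK : IsCompact K) (hστ : ∀ x, x ∉ K → ∀ J, σ J x = τ J x)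
    {g : Fn N} (hg : IsLocal g) (i : Fin N) :
    Integrable (fun x => Dtot i g (jet σ x) - Dtot i g (jet τ x)) ∧
    ∫ x, (Dtot i g (jet σ x) - Dtot i g (jet τ x)) = 0 := by
  set G : (Fin N → ℝ) → ℝ := fun x => g (jet σ x) - g (jet τ x) with hG
  have h1 := hσ.contDiff_comp hg
  have h2 := hτ.contDiff_comp hg
  have hGs : ContDiff ℝ (⊤ : ℕ∞) G := h1.sub h2
  have hGc : HasCompactSupport G := HasCompactSupport.intro hK fun x hx => by
    have : jet σ x = jet τ x := by simp only [jet, hστ x hx]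
    simp [hG, this]
  have hG' : ∀ x, fderiv ℝ G x (Pi.single i 1) =
      Dtot i g (jet σ x) - Dtot i g (jet τ x) := fun x => by
    rw [hG, fderiv_fun_sub (h1.differentiable (by simp) x) (h2.differentiable (by simp) x),
      _root_.sub_apply, hσ.fderiv_comp hg, hτ.fderiv_comp hg]
  have hint : Integrable (fun x => fderiv ℝ G x (Pi.single i 1)) :=
    (((hGs.continuous_fderiv (by simp)).clm_apply continuous_const)).integrable_of_hasCompactSupport
      (hGc.fderiv_apply (𝕜 := ℝ) _)
  simp only [← hG']
  refine ⟨hint, ?_⟩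
  have h := integral_mul_fderiv_eq_neg_fderiv_mul_of_integrable (μ := (volume : Measure (Fin N → ℝ)))
    (f := fun _ => (1 : ℝ)) (g := G) (v := Pi.single i 1) (by simp) (by simpa using hint)
    (by simpa using hGs.continuous.integrable_of_hasCompactSupport hGc)
    (fun x _ => differentiableAt_const _) (fun x _ => hGs.differentiable (by simp) x)
  simpa using h

/-! ### Integration by parts -/

theorem pderivU_congr_of {S : Finset (MI N)} {f : Fn N}
    (hf : ∀ p p' : JetPt N, p.1 = p'.1 → (∀ J ∈ S, p.2 J = p'.2 J) → f p = f p') (K : MI N) :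
    (∀ p p' : JetPt N, p.1 = p'.1 → (∀ J ∈ S, p.2 J = p'.2 J) →
      pderivU K f p = pderivU K f p') ∧ (K ∉ S → pderivU K f = fun _ => 0) := by
  have h0 : K ∉ S → pderivU K f = fun _ => 0 := fun hK => by
    ext p
    have : (fun t => f (p.1, update p.2 K t)) = fun _ => f p := by
      ext t
      refine hf _ _ rfl fun J hJ => ?_
      have : J ≠ K := fun h => hK (h ▸ hJ)
      simp [update_of_ne this]
    simp [pderivU, this]
  refine ⟨fun p p' h1 h2 => ?_, h0⟩
  by_cases hK : K ∈ S
  · unfold pderivU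
    rw [h2 K hK]
    congr 1
    ext t
    refine hf _ _ h1 fun J hJ => ?_
    by_cases hJK : J = K
    · subst hJK; simp
    · simp [update_of_ne hJK, h2 J hJ]
  · rw [h0 hK]

theorem pderivU_zero_fn (J : MI N) : pderivU J (fun _ => 0 : Fn N) = fun _ => 0 := by
  ext p; simp [pderivU]

/-- A vertical derivative involving a coordinate on which `f` does not depend kills `f`. -/
theorem UList_eq_zero {S : Finset (MI N)} {f : Fn N}
    (hf : ∀ p p' : JetPt N, p.1 = p'.1 → (∀ J ∈ S, p.2 J = p'.2 J) → f p = f p')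
    (α : MI N →₀ ℕ) (l : List (MI N)) :
    (∀ p p' : JetPt N, p.1 = p'.1 → (∀ J ∈ S, p.2 J = p'.2 J) →
      UList α l f p = UList α l f p') ∧
    ((∃ J ∈ l, α J ≠ 0 ∧ J ∉ S) → UList α l f = fun _ => 0) := by
  induction l with
  | nil => exact ⟨hf, fun ⟨J, hJ, _⟩ => by simp at hJ⟩
  | cons K l ih =>
    rw [UList_cons]
    have hit : ∀ k, ∀ p p' : JetPt N, p.1 = p'.1 → (∀ J ∈ S, p.2 J = p'.2 J) →
      (pderivU K)^[k] (UList α l f) p = (pderivU K)^[k] (UList α l f) p' := by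
      intro k
      induction k with
      | zero => exact ih.1
      | succ k ihk => rw [iterate_succ_apply']; exact (pderivU_congr_of ihk K).1
    refine ⟨hit _, fun ⟨J, hJ, hα, hJS⟩ => ?_⟩
    rcases List.mem_cons.1 hJ with rfl | hJl
    · obtain ⟨k, hk⟩ := Nat.exists_eq_succ_of_ne_zero hα
      rw [hk, iterate_succ_apply']
      exact (pderivU_congr_of (hit k) J).2 hJS
    · rw [ih.2 ⟨J, hJl, hα, hJS⟩, iterate_fixed (pderivU_zero_fn K)]

theorem IsLocal.exists_degf_bound {f : Fn N} (hf : IsLocal f) :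
    ∃ m, ∀ α, JetBundle.UPow α f ≠ (fun _ => 0) → degf α ≤ m := by
  obtain ⟨S, g, -, hfg⟩ := hf
  have hdep : ∀ p p' : JetPt N, p.1 = p'.1 → (∀ J ∈ S, p.2 J = p'.2 J) → f p = f p' :=
    fun p p' h1 h2 => by
      rw [hfg, hfg, h1]; congr 2; ext J; exact h2 J.1 J.2
  refine ⟨S.sup fun J => ∑ i, J i, fun α hα => ?_⟩
  refine Finset.sup_mono fun J hJ => ?_
  by_contra hJS
  exact hα ((UList_eq_zero hdep α α.support.toList).2
    ⟨J, by simpa using hJ, Finsupp.mem_support_iff.1 hJ, hJS⟩)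

/-- The product `(∂/∂u)^{α_1} f_1 · ∏_{j ≥ 2} (d/dx)^{I_j} (∂/∂u)^{α_j} f_j` to which the total
derivative `(d/dx)^{I_1}` is applied in a polarized operator. -/
noncomputable def slot [NeZero n] (Iα : Idx N n) (f : Fin n → Fn N) : Fn N := fun p =>
  ∏ j, if j = (0 : Fin n) then UPow (Iα.2 j) (f j) p else DPow (Iα.1 j) (UPow (Iα.2 j) (f j)) p

theorem realizeP_eq [NeZero n] (q : OpData N n) (f : Fin n → Fn N) (pt : JetPt N) :
    realizeP q f pt = ∑' Iα : Idx N n, q Iα pt * DPow (Iα.1 0) (slot Iα f) pt := rfl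

theorem slot_update [NeZero n] (Iα : Idx N n) (K : MI N) (f : Fin n → Fn N) :
    slot (update Iα.1 0 K, Iα.2) f = slot Iα f := by
  ext p
  refine Finset.prod_congr rfl fun j _ => ?_
  by_cases hj : j = 0
  · simp [hj]
  · simp [hj]

theorem isLocal_slot [NeZero n] (Iα : Idx N n) {f : Fin n → Fn N} (hf : LocalTuple f) :
    IsLocal (slot Iα f) := by
  refine IsLocal.prod _ (f := fun j p => if j = (0 : Fin n) then UPow (Iα.2 j) (f j) p
    else DPow (Iα.1 j) (UPow (Iα.2 j) (f j)) p) fun j _ => ?_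
  by_cases hj : j = 0
  · simpa only [hj, if_true] using (hf _).UPow _
  · simpa only [hj, if_false] using ((hf _).UPow _).DPow _

theorem slot_bound [NeZero n] {f : Fin n → Fn N} (hf : LocalTuple f) :
    ∃ m, ∀ Iα : Idx N n, slot Iα f ≠ (fun _ => 0) → ∑ j, degf (Iα.2 j) ≤ m := by
  choose m hm using fun j => (hf j).exists_degf_bound
  refine ⟨∑ j, m j, fun Iα h => Finset.sum_le_sum fun j _ => hm j _ fun h0 => h ?_⟩
  ext p
  refine Finset.prod_eq_zero (Finset.mem_univ j) ?_
  by_cases hj : j = 0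
  · rw [if_pos hj, h0]
  · rw [if_neg hj, h0, DPow_zero_fn]

/-- On a fixed tuple of local functions both an operator and its characteristic are finite sums,
indexed by the same set of coefficients. -/
theorem exists_finite_sum [NeZero n] {q : OpData N n} (hq : Good q) {f : Fin n → Fn N}
    (hf : LocalTuple f) : ∃ T : Finset (Idx N n),
      (∀ pt, realizeP q f pt = ∑ Iα ∈ T, q Iα pt * DPow (Iα.1 0) (slot Iα f) pt) ∧
      (∀ pt, realizeP (chiData q) f pt = ∑ Iα ∈ T,
        (-1 : ℝ) ^ (∑ i, Iα.1 0 i) * DPow (Iα.1 0) (q Iα) pt * slot Iα f pt) := by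
  classical
  obtain ⟨m, hm⟩ := slot_bound hf
  set T := (hq.2 m).toFinset with hT
  have hmem : ∀ Iα, Iα ∈ T ↔ q Iα ≠ 0 ∧ ∑ j, degf (Iα.2 j) ≤ m := fun Iα => by simp [hT]
  refine ⟨T, fun pt => ?_, fun pt => ?_⟩
  · rw [realizeP_eq]
    refine tsum_eq_sum fun Iα hI => ?_
    by_cases h0 : q Iα = 0
    · simp [h0]
    · have : slot Iα f = fun _ => 0 := by
        by_contra hs
        exact hI ((hmem _).2 ⟨h0, hm _ hs⟩)
      rw [this, DPow_zero_fn, mul_zero]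
  -- The characteristic sums over `I_1` inside each coefficient: group the index set by the
  -- fibres of the map `π` which forgets `I_1`.
  · let π : Idx N n → Idx N n := fun Iα => (update Iα.1 0 0, Iα.2)
    have hπ : ∀ (τ : Idx N n), τ.1 0 = 0 → ∀ K, π (update τ.1 0 K, τ.2) = τ := fun τ h K => by
      refine Prod.ext ?_ rfl
      simp only [π, update_idem]
      rw [← h, update_eq_self]
    rw [realizeP_eq, tsum_eq_sum (s := T.image π)]
    · refine (Finset.sum_congr rfl fun τ hτ => ?_).trans (Finset.sum_fiberwise_of_maps_to
        (fun x hx => Finset.mem_image_of_mem π hx) _)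
      obtain ⟨σ, hσT, rfl⟩ := Finset.mem_image.1 hτ
      have hσ0 : (π σ).1 0 = 0 := by simp [π]
      have hσd := ((hmem σ).1 hσT).2
      set τ := π σ with hτdef
      have hτ2 : τ.2 = σ.2 := rfl
      rw [hσ0, DPow_zero_idx, chiData, if_pos hσ0,
        tsum_eq_sum (s := (T.filter fun x => π x = τ).image fun x => x.1 0), Finset.sum_image,
        Finset.sum_mul]
      · refine Finset.sum_congr rfl fun x hx => ?_
        have hx := (Finset.mem_filter.1 hx).2
        have h1 : (update τ.1 0 (x.1 0), τ.2) = x := by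
          rw [← hx]; simp [π]
        have h2 : slot τ f = slot x f := by rw [← hx]; exact slot_update x 0 f
        rw [h1, h2]
      · intro x hx y hy hxy
        have hx := (Finset.mem_filter.1 hx).2
        have hy := (Finset.mem_filter.1 hy).2
        have h1 : ∀ z, π z = τ → z = (update τ.1 0 (z.1 0), τ.2) := fun z hz => by
          rw [← hz]; simp [π]
        rw [h1 x hx, h1 y hy]
        simp only at hxy
        rw [hxy]
      · intro K hK
        have : q (update τ.1 0 K, τ.2) = 0 := by
          by_contra h0
          refine hK (Finset.mem_image.2 ⟨(update τ.1 0 K, τ.2), Finset.mem_filter.2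
            ⟨(hmem _).2 ⟨h0, hσd⟩, hπ τ hσ0 K⟩, by simp⟩)
        rw [this]
        change _ * DPow K (fun _ => 0) pt = 0
        rw [DPow_zero_fn, mul_zero]
    · intro τ hτ
      by_cases hs : slot τ f = fun _ => 0
      · rw [hs, DPow_zero_fn, mul_zero]
      by_cases h0 : τ.1 0 = 0
      · have : ∀ K, q (update τ.1 0 K, τ.2) = fun _ => 0 := fun K => by
          by_contra hne
          exact hτ (Finset.mem_image.2 ⟨_, (hmem _).2 ⟨hne, hm τ hs⟩, hπ τ h0 K⟩)
        simp [chiData, h0, this, DPow_zero_fn]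
      · simp [chiData, h0]

/-- `h` is a total divergence of local functions. -/
def IsDiv (h : Fn N) : Prop :=
  ∃ g : Fin N → Fn N, (∀ i, IsLocal (g i)) ∧ ∀ pt, h pt = ∑ i, Dtot i (g i) pt

theorem IsDiv.zero : IsDiv (N := N) (fun _ => 0) :=
  ⟨fun _ _ => 0, fun _ => IsLocal.const 0, fun _ => by simp [Dtot_const]⟩

theorem IsDiv.add {a b : Fn N} (ha : IsDiv a) (hb : IsDiv b) : IsDiv (fun p => a p + b p) := by
  obtain ⟨g, hg, hga⟩ := ha
  obtain ⟨h, hh, hhb⟩ := hb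
  refine ⟨fun i p => g i p + h i p, fun i => (hg i).add (hh i), fun p => ?_⟩
  simp only [hga, hhb, Dtot_add (hg _) (hh _), Finset.sum_add_distrib]

theorem IsDiv.const_mul {a : Fn N} (ha : IsDiv a) (c : ℝ) : IsDiv (fun p => c * a p) := by
  obtain ⟨g, hg, hga⟩ := ha
  refine ⟨fun i p => c * g i p, fun i => (IsLocal.const c).mul (hg i), fun p => ?_⟩
  simp only [hga, Dtot_mul (IsLocal.const c) (hg _), Dtot_const, Finset.mul_sum, zero_mul, zero_add]

theorem IsDiv.sum {ι : Type*} (s : Finset ι) {a : ι → Fn N} (ha : ∀ k, IsDiv (a k)) :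
    IsDiv (fun p => ∑ k ∈ s, a k p) := by
  classical
  induction s using Finset.induction_on with
  | empty => simpa using IsDiv.zero
  | insert k s hk ih => simp only [Finset.sum_insert hk]; exact (ha k).add ih

theorem isDiv_Dtot {a : Fn N} (ha : IsLocal a) (i : Fin N) : IsDiv (Dtot i a) := by
  classical
  refine ⟨fun k => if k = i then a else fun _ => 0, fun k => ?_, fun p => ?_⟩
  · dsimp only
    split_ifs
    exacts [ha, IsLocal.const 0]
  · rw [Finset.sum_eq_single i]
    · simp
    · intro k _ hk; simp [hk, Dtot_const]
    · simp

theorem isDiv_iterate {a b : Fn N} (i : Fin N) (k : ℕ) (ha : IsLocal a) (hb : IsLocal b) :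
    IsDiv (fun p => a p * (Dtot i)^[k] b p - (-1 : ℝ) ^ k * (Dtot i)^[k] a p * b p) := by
  induction k generalizing b with
  | zero => simpa using IsDiv.zero
  | succ k ih =>
    have h1 := ih (hb.Dtot i)
    have hk := ha.iterate_Dtot i k
    have h2 := (isDiv_Dtot (hk.mul hb) i).const_mul ((-1 : ℝ) ^ k)
    convert h1.add h2 using 2 with p
    rw [Dtot_mul hk hb, iterate_succ_apply, iterate_succ_apply' (f := Dtot i) (x := a), pow_succ]
    ring

theorem DList_Dtot_iterate_comm {a : Fn N} (ha : IsLocal a) (I : MI N) (l : List (Fin N))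
    (i : Fin N) (k : ℕ) : DList I l ((Dtot i)^[k] a) = (Dtot i)^[k] (DList I l a) := by
  have hone : ∀ (j : Fin N) (m : ℕ) {b : Fn N}, IsLocal b →
      (Dtot j)^[m] (Dtot i b) = Dtot i ((Dtot j)^[m] b) := by
    intro j m b hb
    induction m with
    | zero => rfl
    | succ m ih =>
      rw [iterate_succ_apply', ih, iterate_succ_apply', Dtot_comm (hb.iterate_Dtot j m)]
  have h1 : ∀ {b : Fn N}, IsLocal b → DList I l (Dtot i b) = Dtot i (DList I l b) := by
    intro b hb
    induction l with
    | nil => rfl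
    | cons j l ih => rw [DList_cons, ih, hone _ _ (hb.DList I l), DList_cons]
  induction k with
  | zero => rfl
  | succ k ih => rw [iterate_succ_apply', h1 (ha.iterate_Dtot i k), ih, iterate_succ_apply']

theorem isDiv_DList {a b : Fn N} (I : MI N) (l : List (Fin N)) (ha : IsLocal a)
    (hb : IsLocal b) :
    IsDiv (fun p => a p * DList I l b p - (-1 : ℝ) ^ (l.map I).sum * DList I l a p * b p) := by
  induction l generalizing a with
  | nil => simpa [DList] using IsDiv.zero
  | cons i l ih =>
    have h1 := isDiv_iterate i (I i) ha (hb.DList I l)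
    have h2 := (ih (ha.iterate_Dtot i (I i))).const_mul ((-1 : ℝ) ^ I i)
    rw [DList_Dtot_iterate_comm ha] at h2
    convert h1.add h2 using 2 with p
    rw [DList_cons, DList_cons, List.map_cons, List.sum_cons, pow_add]
    ring

/-- Iterated integration by parts: `a · D^I b` and `(-1)^{|I|} D^I a · b` differ by a total
divergence. -/
theorem isDiv_DPow {a b : Fn N} (I : MI N) (ha : IsLocal a) (hb : IsLocal b) :
    IsDiv (fun p => a p * DPow I b p - (-1 : ℝ) ^ (∑ i, I i) * DPow I a p * b p) := by
  have h := isDiv_DList I (List.finRange N) ha hb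
  have hs : ((List.finRange N).map I).sum = ∑ i, I i := by
    rw [← List.ofFn_eq_map, List.sum_ofFn]
  rwa [hs] at h

/-- An operator and its characteristic agree modulo total divergences. -/
theorem isDiv_realizeP_sub [NeZero n] {q : OpData N n} (hq : Good q) {f : Fin n → Fn N}
    (hf : LocalTuple f) :
    IsDiv (fun p => realizeP q f p - realizeP (chiData q) f p) := by
  obtain ⟨T, h1, h2⟩ := exists_finite_sum hq hf
  simp only [h1, h2, ← Finset.sum_sub_distrib]
  exact IsDiv.sum T fun Iα => isDiv_DPow _ (hq.1 _) (isLocal_slot _ hf)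

theorem isLocal_realizeP_chiData [NeZero n] {q : OpData N n} (hq : Good q) {f : Fin n → Fn N}
    (hf : LocalTuple f) : IsLocal (realizeP (chiData q) f) := by
  obtain ⟨T, -, h2⟩ := exists_finite_sum hq hf
  rw [funext h2]
  exact IsLocal.sum T fun Iα _ =>
    ((IsLocal.const _).mul ((hq.1 _).DPow _)).mul (isLocal_slot _ hf)

/-! ### Detection of the characteristic by integrals -/

/-- Vertical derivatives are linear over functions of the base and are local in the coordinate
`u_0`. -/
theorem pderivU_of_eqOn {V : Set ℝ} (hV : IsOpen V) {h : (Fin N → ℝ) → ℝ} {F G : Fn N}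
    (hFG : ∀ p : JetPt N, p.2 0 ∈ V → F p = h p.1 * G p) (J : MI N) (p : JetPt N)
    (hp : p.2 0 ∈ V) : pderivU J F p = h p.1 * pderivU J G p := by
  unfold pderivU
  rw [← deriv_const_mul_field]
  refine Filter.EventuallyEq.deriv_eq ?_
  by_cases hJ : J = 0
  · subst hJ
    filter_upwards [hV.mem_nhds hp] with t ht
    exact hFG _ (by simpa using ht)
  · refine Filter.Eventually.of_forall fun t => hFG _ ?_
    simpa [update_of_ne (Ne.symm hJ)] using hp

theorem UPow_of_eqOn {V : Set ℝ} (hV : IsOpen V) {h : (Fin N → ℝ) → ℝ} {F G : Fn N}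
    (hFG : ∀ p : JetPt N, p.2 0 ∈ V → F p = h p.1 * G p) (α : MI N →₀ ℕ) (p : JetPt N)
    (hp : p.2 0 ∈ V) : UPow α F p = h p.1 * UPow α G p := by
  have hl : ∀ (l : List (MI N)) (p : JetPt N), p.2 0 ∈ V →
      UList α l F p = h p.1 * UList α l G p := by
    intro l
    induction l with
    | nil => exact hFG
    | cons J l ih =>
      rw [UList_cons, UList_cons]
      induction α J with
      | zero => exact ih
      | succ k ihk =>
        rw [iterate_succ_apply', iterate_succ_apply']
        exact pderivU_of_eqOn hV ihk J
  exact hl _ p hp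

/-- The characteristic does not differentiate its first argument horizontally. Hence it is linear
over functions of the base in that argument, and local in the coordinate `u_0`. -/
theorem realizeP_chiData_of_eqOn [NeZero n] (q : OpData N n) (f : Fin n → Fn N) {V : Set ℝ}
    (hV : IsOpen V) {h : (Fin N → ℝ) → ℝ} {F G : Fn N}
    (hFG : ∀ p : JetPt N, p.2 0 ∈ V → F p = h p.1 * G p) (p : JetPt N) (hp : p.2 0 ∈ V) :
    realizeP (chiData q) (update f 0 F) p = h p.1 * realizeP (chiData q) (update f 0 G) p := by
  rw [realizeP_eq, realizeP_eq, ← tsum_mul_left]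
  refine tsum_congr fun Iα => ?_
  by_cases h0 : Iα.1 0 = 0
  · have hs : ∀ H : Fn N, slot Iα (update f 0 H) p = UPow (Iα.2 0) H p *
        ∏ j ∈ Finset.univ.erase 0, DPow (Iα.1 j) (UPow (Iα.2 j) (f j)) p := fun H => by
      unfold slot
      rw [← Finset.mul_prod_erase _ _ (Finset.mem_univ (0 : Fin n)), if_pos rfl, update_self]
      congr 1
      refine Finset.prod_congr rfl fun j hj => ?_
      rw [if_neg (Finset.ne_of_mem_erase hj), update_of_ne (Finset.ne_of_mem_erase hj)]
    rw [h0, DPow_zero_idx, DPow_zero_idx, hs, hs, UPow_of_eqOn hV hFG _ _ hp]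
    ring
  · simp [chiData, h0]

/-- A section can be raised by the constant `4` on a ball around `x₀` by a variation supported in
the ball of twice the radius. -/
theorem exists_moved_section {σ : MI N → (Fin N → ℝ) → ℝ} (hσ : Holonomic σ) (x₀ : Fin N → ℝ)
    {r : ℝ} (hr : 0 < r) : ∃ τ, Holonomic τ ∧
      (∀ x ∈ Metric.closedBall x₀ r, τ 0 x = σ 0 x + 4) ∧
      (∀ x ∉ Metric.closedBall x₀ (2 * r), ∀ J, σ J x = τ J x) := by
  let β : ∀ i, ContDiffBump (x₀ i) := fun i => ⟨r, 2 * r, hr, by linarith⟩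
  refine ⟨fun J x => σ J x + 4 * prodSec (fun i => (β i : ℝ → ℝ)) J x,
    hσ.add ((holonomic_prodSec fun i => (β i).contDiff).const_mul 4), fun x hx => ?_,
    fun x hx J => ?_⟩
  · have : prodSec (fun i => (β i : ℝ → ℝ)) 0 x = 1 := by
      refine Finset.prod_eq_one fun i _ => ?_
      simp only [Pi.zero_apply, iteratedDeriv_zero]
      exact (β i).one_of_mem_closedBall
        (Metric.mem_closedBall.2 ((dist_le_pi_dist x x₀ i).trans (Metric.mem_closedBall.1 hx)))
    simp only [this, mul_one]
  · obtain ⟨i, hi⟩ : ∃ i, 2 * r < dist (x i) (x₀ i) := by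
      by_contra! hc
      exact hx (Metric.mem_closedBall.2 ((dist_pi_le_iff (by positivity)).2 hc))
    have : prodSec (fun i => (β i : ℝ → ℝ)) J x = 0 := by
      refine Finset.prod_eq_zero (Finset.mem_univ i) ?_
      have hev : (β i : ℝ → ℝ) =ᶠ[nhds (x i)] fun _ => 0 := by
        have ho : IsOpen {t : ℝ | 2 * r < dist t (x₀ i)} :=
          isOpen_lt continuous_const (continuous_id.dist continuous_const)
        filter_upwards [ho.mem_nhds hi] with t ht
        exact (β i).zero_of_le_dist (le_of_lt ht)
      rw [hev.iteratedDeriv_eq]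
      simp
    simp [this]

open MeasureTheory in
/-- If all values of the characteristic are total divergences, then it vanishes. -/
theorem realizeP_chiData_eq_zero [NeZero n] {q : OpData N n} (hq : Good q)
    (hdiv : ∀ f, LocalTuple f → IsDiv (realizeP (chiData q) f)) (f : Fin n → Fn N)
    (hf : LocalTuple f) (pt : JetPt N) : realizeP (chiData q) f pt = 0 := by
  classical
  by_contra hne
  have hB := isLocal_realizeP_chiData hq hf
  obtain ⟨σ, hσ, hσB⟩ : ∃ σ, Holonomic σ ∧ realizeP (chiData q) f (jet σ pt.1) ≠ 0 := by
    obtain ⟨S, g, -, hfg⟩ := hB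
    obtain ⟨σ, hσ, hσp⟩ := exists_holonomic pt S
    refine ⟨σ, hσ, fun h0 => hne ?_⟩
    rw [hfg] at h0 ⊢
    rw [← h0]
    simp only [jet]
    congr 2
    ext J
    exact (hσp J.1 J.2).symm
  set x₀ := pt.1
  set c := σ 0 x₀
  set b : (Fin N → ℝ) → ℝ := fun x => realizeP (chiData q) f (jet σ x)
  have hb : ContDiff ℝ (⊤ : ℕ∞) b := hσ.contDiff_comp hB
  obtain ⟨r, hr, hφ⟩ : ∃ r > 0, ∀ x ∈ Metric.closedBall x₀ r, dist (σ 0 x) c < 1 := by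
    obtain ⟨ε, hε, h⟩ := Metric.continuous_iff.1 (hσ.smooth 0).continuous x₀ 1 one_pos
    exact ⟨ε / 2, half_pos hε, fun x hx => h x (by
      have := Metric.mem_closedBall.1 hx
      linarith)⟩
  obtain ⟨τ, hτ, hτ4, hστ⟩ := exists_moved_section hσ x₀ hr
  let ρ : ContDiffBump x₀ := ⟨r / 2, r, half_pos hr, half_lt_self hr⟩
  let κ : ContDiffBump c := ⟨1, 2, one_pos, one_lt_two⟩
  -- The factor `b` makes the integrand below a square.
  let h : (Fin N → ℝ) → ℝ := fun x => ρ x * b x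
  let F : Fn N := fun p => h p.1 * (κ (p.2 0) * f 0 p)
  have hF : IsLocal F := by
    refine IsLocal.mul (f := fun p => h p.1) (g := fun p => κ (p.2 0) * f 0 p)
      ⟨∅, fun y => h y.1, (ρ.contDiff.mul hb).comp contDiff_fst, fun _ => rfl⟩
      (IsLocal.mul (f := fun p => κ (p.2 0)) ⟨{0}, fun y => κ (y.2 ⟨0, by simp⟩),
        κ.contDiff.comp ?_, fun _ => rfl⟩ (hf 0))
    fun_prop
  have hf' : LocalTuple (update f 0 F) := fun j => by
    by_cases hj : j = 0
    · subst hj; simpa using hF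
    · simpa [update_of_ne hj] using hf j
  have hoff : ∀ p : JetPt N, p.1 ∉ Metric.closedBall x₀ r →
      realizeP (chiData q) (update f 0 F) p = 0 := fun p hp => by
    have h0 : h p.1 = 0 := by
      have : (ρ : (Fin N → ℝ) → ℝ) p.1 = 0 :=
        ρ.zero_of_le_dist (le_of_lt (not_le.1 fun hle => hp (Metric.mem_closedBall.2 hle)))
      simp [h, this]
    rw [realizeP_chiData_of_eqOn q f isOpen_univ (h := h)
      (G := fun p => κ (p.2 0) * f 0 p) (fun _ _ => rfl) p trivial, h0, zero_mul]
  have hστB : ∀ x, realizeP (chiData q) (update f 0 F) (jet σ x)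
      - realizeP (chiData q) (update f 0 F) (jet τ x) = ρ x * b x ^ 2 := by
    intro x
    -- Over the ball the cut-off in `u_0` is `1` along `σ` and `0` along `τ`.
    by_cases hx : x ∈ Metric.closedBall x₀ r
    · have h1 := realizeP_chiData_of_eqOn q f (V := Metric.ball c 1) Metric.isOpen_ball (h := h)
        (F := F) (G := f 0) (fun p hp => by
          have : (κ : ℝ → ℝ) (p.2 0) = 1 :=
            κ.one_of_mem_closedBall (Metric.ball_subset_closedBall hp)
          simp [F, this]) (jet σ x) (hφ x hx)
      have h2 := realizeP_chiData_of_eqOn q f (V := (Metric.closedBall c 2)ᶜ)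
        Metric.isClosed_closedBall.isOpen_compl (h := fun _ => 0)
        (F := F) (G := f 0) (fun p hp => by
          have : (κ : ℝ → ℝ) (p.2 0) = 0 :=
            κ.zero_of_le_dist (le_of_lt (not_le.1 fun hle => hp (Metric.mem_closedBall.2 hle)))
          simp [F, this]) (jet τ x) (by
          have hd := hφ x hx
          rw [Set.mem_compl_iff, Metric.mem_closedBall, not_le]
          change 2 < dist (τ 0 x) c
          rw [hτ4 x hx]
          rw [Real.dist_eq, abs_lt] at hd
          rw [Real.dist_eq, lt_abs]
          left
          linarith [hd.1])
      rw [h1, h2, update_eq_self]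
      simp only [h, b, jet]
      ring
    · have : (ρ : (Fin N → ℝ) → ℝ) x = 0 :=
        ρ.zero_of_le_dist (le_of_lt (not_le.1 fun hle => hx (Metric.mem_closedBall.2 hle)))
      rw [hoff (jet σ x) hx, hoff (jet τ x) hx, this]
      simp
  obtain ⟨g, hg, hgB⟩ := hdiv _ hf'
  have hint : ∫ x, ρ x * b x ^ 2 = 0 := by
    have hK : IsCompact (Metric.closedBall x₀ (2 * r)) := isCompact_closedBall _ _
    simp only [← hστB, hgB, ← Finset.sum_sub_distrib]
    rw [integral_finsetSum _ fun i _ => (integral_Dtot_sub hσ hτ hK hστ (hg i) i).1]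
    exact Finset.sum_eq_zero fun i _ => (integral_Dtot_sub hσ hτ hK hστ (hg i) i).2
  have hpos : 0 < ∫ x, ρ x * b x ^ 2 := by
    refine Continuous.integral_pos_of_hasCompactSupport_nonneg_nonzero (x := x₀)
      (ρ.continuous.mul (hb.continuous.pow 2)) ρ.hasCompactSupport.mul_right
      (fun x => mul_nonneg ρ.nonneg (sq_nonneg _)) ?_
    have : (ρ : (Fin N → ℝ) → ℝ) x₀ = 1 :=
      ρ.one_of_mem_closedBall (Metric.mem_closedBall_self ρ.rIn_pos.le)
    rw [this, one_mul]
    exact pow_ne_zero 2 hσB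
  exact hpos.ne' hint

end

/-- For an `n`-multilinear local differential operator `A`, viewed as a map
`Loc(E)^{⊗n} → Ω^{N,0}`, the value `A(f_1,…,f_n)` lies in `d_H(Ω^{N−1,0})` for every tuple of
local functions (i.e. is a sum `Σ_i d/dx^i g_i` of total derivatives of local functions, the
coefficients of an `(N−1)`-form with signs absorbed) if and only if `χ(A) = 0`. -/
theorem mem_dH_image_iff_chi_zero {N n : ℕ} [NeZero n] (q : OpData N n) (hq : Good q) :
    (∀ f, LocalTuple f → ∃ g : Fin N → Fn N, (∀ i, IsLocal (g i)) ∧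
        ∀ pt, realizeP q f pt = ∑ i, Dtot i (g i) pt)
      ↔ (∀ f, LocalTuple f → ∀ pt, realizeP (chiData q) f pt = 0) := by
  refine ⟨fun hA => realizeP_chiData_eq_zero hq fun f hf => ?_, fun hχ f hf => ?_⟩
  · have hA' : IsDiv (realizeP q f) := hA f hf
    convert hA'.add ((isDiv_realizeP_sub hq hf).const_mul (-1)) using 2 with p
    ring
  · have h := isDiv_realizeP_sub hq hf
    simp only [hχ f hf, sub_zero] at h
    exact h

end JetBundle
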